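/- arXiv:1704.02153 — 3 statements merged into one kernel-verified Lean document; each statement's English description precedes it below -/
import Mathlib

section
/- (Corollary 2.1) Let A = (a_{ijk}) ∈ ℝ^{n×n×n} (n ≥ 1) be a piezoelectric-type tensor and let λ* be the largest C-eigenvalue of A (a C-eigenvalue such that every C-eigenvalue λ satisfies λ ≤ λ*). Then λ* ≤ ρ, where ρ := max_{i,j∈N} (R_i^{(1)}(A) · R_j^{(3)}(A))^{1/2}, R_i^{(1)}(A) := Σ_{l,k∈N} |a_{ilk}| and R_j^{(3)}(A) := Σ_{l,k∈N} |a_{lkj}|. -/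
open Finset

/-- `λ` is a C-eigenvalue of the piezoelectric-type tensor `a` with left C-eigenvector `x`
and right C-eigenvector `y`:
`A y y = λ x`, `x A y = λ y`, `xᵀ x = 1`, `yᵀ y = 1`. -/
def CEig {n : ℕ} (a : Fin n → Fin n → Fin n → ℝ) (lam : ℝ) (x y : Fin n → ℝ) : Prop :=
  (∀ i, ∑ j, ∑ k, a i j k * y j * y k = lam * x i) ∧
  (∀ i, ∑ j, ∑ k, a j k i * x j * y k = lam * y i) ∧
  (∑ i, x i * x i = 1) ∧ (∑ i, y i * y i = 1)

/-- `R_i^{(1)}(A) = ∑_{l,k} |a_{ilk}|`. -/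
noncomputable def R1 {n : ℕ} (a : Fin n → Fin n → Fin n → ℝ) (i : Fin n) : ℝ :=
  ∑ l, ∑ k, |a i l k|

/-- `R_j^{(3)}(A) = ∑_{l,k} |a_{lkj}|`. -/
noncomputable def R3 {n : ℕ} (a : Fin n → Fin n → Fin n → ℝ) (j : Fin n) : ℝ :=
  ∑ l, ∑ k, |a l k j|

/-- `ρ = max_{i,j} (R_i^{(1)}(A) R_j^{(3)}(A))^{1/2}`. -/
noncomputable def rho {n : ℕ} (hn : 0 < n) (a : Fin n → Fin n → Fin n → ℝ) : ℝ :=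
  Finset.univ.sup' (Finset.univ_nonempty_iff.mpr ⟨(⟨0, hn⟩, ⟨0, hn⟩)⟩)
    (fun p : Fin n × Fin n => Real.sqrt (R1 a p.1 * R3 a p.2))

/-!
Evaluate the two eigenvalue equations where the eigenvectors are largest in absolute value:
`A y y = λ x` at an index `p` maximising `|x p|`, and `x A y = λ y` at an index `q` maximising
`|y q|`. As `|y j| ≤ 1` for every `j`, the first gives `|λ| |x p| ≤ R1 p`; cancelling `|y q|`, the
second gives `|λ| ≤ R3 q |x p|`. In the product of the two bounds the unknown `|x p|` cancels,
leaving `λ² ≤ R1 p R3 q`.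
-/

section FiniteSums

variable {ι κ R : Type*}

theorem exists_forall_abs_le_abs_and_pos [Finite ι] [AddCommGroup R] [LinearOrder R]
    [IsOrderedAddMonoid R] {u : ι → R} (hu : u ≠ 0) :
    ∃ p, (∀ i, |u i| ≤ |u p|) ∧ 0 < |u p| := by
  obtain ⟨i, hi⟩ := Function.ne_iff.mp hu
  have : Nonempty ι := ⟨i⟩
  obtain ⟨p, hp⟩ := Finite.exists_max fun i ↦ |u i|
  exact ⟨p, hp, (abs_pos.mpr hi).trans_le (hp i)⟩

theorem ne_zero_of_sum_mul_self_eq_one [Fintype ι] [NonAssocSemiring R] [Nontrivial R]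
    {u : ι → R} (hu : ∑ i, u i * u i = 1) : u ≠ 0 := by
  rintro rfl
  simp at hu

variable [CommRing R] [LinearOrder R] [IsStrictOrderedRing R]

theorem abs_le_one_of_sum_mul_self_eq_one [Fintype ι] {u : ι → R}
    (hu : ∑ i, u i * u i = 1) (i : ι) : |u i| ≤ 1 := by
  rw [abs_le_one_iff_mul_self_le_one, ← hu]
  exact single_le_sum (f := fun i ↦ u i * u i) (fun i _ ↦ mul_self_nonneg (u i)) (mem_univ i)

theorem abs_sum_sum_mul_mul_le [Fintype ι] [Fintype κ] (b : ι → κ → R) {u : ι → R} {v : κ → R}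
    {U V : R} (hu : ∀ i, |u i| ≤ U) (hv : ∀ j, |v j| ≤ V) :
    |∑ i, ∑ j, b i j * u i * v j| ≤ (∑ i, ∑ j, |b i j|) * (U * V) := by
  have term_le (i : ι) (j : κ) : |b i j * u i * v j| ≤ |b i j| * (U * V) := by
    rw [mul_assoc, abs_mul, abs_mul]
    have hU : 0 ≤ U := (abs_nonneg _).trans (hu i)
    gcongr
    exacts [hu i, hv j]
  calc |∑ i, ∑ j, b i j * u i * v j|
      ≤ ∑ i, ∑ j, |b i j * u i * v j| :=
        (abs_sum_le_sum_abs _ _).trans (sum_le_sum fun i _ ↦ abs_sum_le_sum_abs _ _)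
    _ ≤ ∑ i, ∑ j, |b i j| * (U * V) := by gcongr with i _ j _; exact term_le i j
    _ = (∑ i, ∑ j, |b i j|) * (U * V) := by simp only [sum_mul]

end FiniteSums

section CEigenvalues

variable {n : ℕ} {a : Fin n → Fin n → Fin n → ℝ} {lam : ℝ} {x y : Fin n → ℝ}

theorem R1_nonneg (a : Fin n → Fin n → Fin n → ℝ) (i : Fin n) : 0 ≤ R1 a i :=
  sum_nonneg fun _ _ ↦ sum_nonneg fun _ _ ↦ abs_nonneg _

theorem sqrt_R1_mul_R3_le_rho (hn : 0 < n) (a : Fin n → Fin n → Fin n → ℝ) (i j : Fin n) :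
    √(R1 a i * R3 a j) ≤ rho hn a :=
  le_sup' (fun p : Fin n × Fin n ↦ √(R1 a p.1 * R3 a p.2)) (mem_univ (i, j))

theorem CEig.abs_mul_abs_left_le_R1 (h : CEig a lam x y) (i : Fin n) :
    |lam| * |x i| ≤ R1 a i := by
  obtain ⟨hleft, -, -, hy⟩ := h
  have hy_le := abs_le_one_of_sum_mul_self_eq_one hy
  calc |lam| * |x i| = |∑ j, ∑ k, a i j k * y j * y k| := by rw [hleft, abs_mul]
    _ ≤ R1 a i * (1 * 1) := abs_sum_sum_mul_mul_le (a i) hy_le hy_le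
    _ = R1 a i := by ring

theorem CEig.abs_mul_abs_right_le_R3_mul (h : CEig a lam x y) {X Y : ℝ}
    (hX : ∀ i, |x i| ≤ X) (hY : ∀ j, |y j| ≤ Y) (i : Fin n) :
    |lam| * |y i| ≤ R3 a i * (X * Y) := by
  obtain ⟨-, hright, -, -⟩ := h
  calc |lam| * |y i| = |∑ j, ∑ k, a j k i * x j * y k| := by rw [hright, abs_mul]
    _ ≤ R3 a i * (X * Y) := abs_sum_sum_mul_mul_le (fun j k ↦ a j k i) hX hY

theorem CEig.exists_sq_le_R1_mul_R3 (h : CEig a lam x y) :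
    ∃ p q, lam ^ 2 ≤ R1 a p * R3 a q := by
  have ⟨_, _, hx, hy⟩ := h
  obtain ⟨p, hp, hxp⟩ := exists_forall_abs_le_abs_and_pos (ne_zero_of_sum_mul_self_eq_one hx)
  obtain ⟨q, hq, hyq⟩ := exists_forall_abs_le_abs_and_pos (ne_zero_of_sum_mul_self_eq_one hy)
  have hR3 : |lam| ≤ R3 a q * |x p| := by
    refine le_of_mul_le_mul_right ?_ hyq
    rw [mul_assoc]
    exact h.abs_mul_abs_right_le_R3_mul hp hq q
  refine ⟨p, q, le_of_mul_le_mul_right ?_ hxp⟩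
  calc lam ^ 2 * |x p| = |lam| * |x p| * |lam| := by rw [← sq_abs]; ring
    _ ≤ R1 a p * (R3 a q * |x p|) :=
      mul_le_mul (h.abs_mul_abs_left_le_R1 p) hR3 (abs_nonneg _) (R1_nonneg a p)
    _ = R1 a p * R3 a q * |x p| := by ring

theorem stmt6_general (hn : 0 < n) (h : CEig a lam x y) : |lam| ≤ rho hn a := by
  obtain ⟨p, q, hpq⟩ := h.exists_sq_le_R1_mul_R3
  exact (Real.abs_le_sqrt hpq).trans (sqrt_R1_mul_R3_le_rho hn a p q)

end CEigenvalues

/-- Corollary 2.1: the largest C-eigenvalue `λ*` satisfies `λ* ≤ ρ`. -/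
theorem stmt6 {n : ℕ} (hn : 0 < n) (a : Fin n → Fin n → Fin n → ℝ)
    (hA : ∀ i j k, a i j k = a i k j)
    (lamstar : ℝ)
    (hmem : ∃ x y : Fin n → ℝ, CEig a lamstar x y)
    (hmax : ∀ lam : ℝ, (∃ x y : Fin n → ℝ, CEig a lam x y) → lam ≤ lamstar) :
    lamstar ≤ rho hn a := by
  obtain ⟨x, y, h⟩ := hmem
  exact (le_abs_self lamstar).trans (stmt6_general hn h)
end

section
/- (Inequality (2.7)) Let A = (a_{ijk}) ∈ ℝ^{n×n×n} be a piezoelectric-type tensor, λ a C-eigenvalue of A with associated left and right C-eigenvectors x and y, S ⊆ N any subset, and let p, q ∈ N be indices with |x_p| = max_{i∈N} |x_i| and |y_q| = max_{i∈N} |y_i|. Then (|λ| − R_q^{Δ_S,(3)}(A)) · |y_q| ≤ R_q^{Δ̄_S,(3)}(A) · |x_p|, where R_q^{Δ_S,(3)}(A) := Σ_{(l,k)∈Δ_S} |a_{lkq}| and R_q^{Δ̄_S,(3)}(A) := Σ_{(l,k)∈Δ̄_S} |a_{lkq}|. -/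
open Finset

/-- `R_j^{Δ_S,(3)}(A) = ∑_{(l,k) : l ∈ S or k ∈ S} |a_{lkj}|`. -/
noncomputable def R3D {n : ℕ} (a : Fin n → Fin n → Fin n → ℝ) (S : Finset (Fin n))
    (j : Fin n) : ℝ :=
  ∑ l, ∑ k, if l ∈ S ∨ k ∈ S then |a l k j| else 0

/-- `R_j^{Δ̄_S,(3)}(A) = ∑_{(l,k) : l ∉ S and k ∉ S} |a_{lkj}|`. -/
noncomputable def R3Dbar {n : ℕ} (a : Fin n → Fin n → Fin n → ℝ) (S : Finset (Fin n))
    (j : Fin n) : ℝ :=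
  ∑ l, ∑ k, if l ∉ S ∧ k ∉ S then |a l k j| else 0

/-!
Write `λ y_q = ∑ a_{lkq} x_l y_k` and split the sum at `Δ`. Unit vectors have all coordinates of
absolute value at most `1`, so `|x_l y_k|` is bounded both by `|y_k| ≤ |y_q|` and by
`|x_l| ≤ |x_p|`. The first bound, used on `Δ`, produces a multiple of `|y_q|` that moves to the
left-hand side; the second bounds the sum over the complement of `Δ`.
-/

section NormSums

variable {ι κ μ R : Type*} [NonUnitalSeminormedRing R]

lemma norm_sum_mul_le_sum_norm_mul (s : Finset ι) (c z : ι → R) {M : ℝ}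
    (hz : ∀ i ∈ s, ‖z i‖ ≤ M) :
    ‖∑ i ∈ s, c i * z i‖ ≤ (∑ i ∈ s, ‖c i‖) * M := by
  rw [sum_mul]
  exact norm_sum_le_of_le s fun i hi => norm_mul_le_of_le le_rfl (hz i hi)

/-- The sum of the norms of the entries `a l k j` with `(l, k) ∈ D`. The set `D` of
index pairs is arbitrary, so that `R_j^{Δ_S,(3)}(A)` and `R_j^{Δ̄_S,(3)}(A)` are both instances. -/
def partialNormSum (a : ι → κ → μ → R) (D : Finset (ι × κ)) (j : μ) : ℝ :=
  ∑ e ∈ D, ‖a e.1 e.2 j‖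

variable [Fintype ι] [Fintype κ] [DecidableEq ι] [DecidableEq κ]

lemma norm_sum_sum_mul_mul_le_partialNormSum (a : ι → κ → μ → R) (D : Finset (ι × κ)) (j : μ)
    {x : ι → R} {y : κ → R} {X Y : ℝ} (hx : ∀ l, ‖x l‖ ≤ 1) (hy : ∀ k, ‖y k‖ ≤ 1)
    (hX : ∀ l, ‖x l‖ ≤ X) (hY : ∀ k, ‖y k‖ ≤ Y) :
    ‖∑ l, ∑ k, a l k j * x l * y k‖ ≤ partialNormSum a D j * Y + partialNormSum a Dᶜ j * X := by
  have hxy_le_Y (e : ι × κ) : ‖x e.1 * y e.2‖ ≤ Y := by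
    simpa only [one_mul] using norm_mul_le_of_le (hx e.1) (hY e.2)
  have hxy_le_X (e : ι × κ) : ‖x e.1 * y e.2‖ ≤ X := by
    simpa only [mul_one] using norm_mul_le_of_le (hX e.1) (hy e.2)
  calc ‖∑ l, ∑ k, a l k j * x l * y k‖
      = ‖∑ e ∈ D, a e.1 e.2 j * (x e.1 * y e.2) + ∑ e ∈ Dᶜ, a e.1 e.2 j * (x e.1 * y e.2)‖ := by
        rw [sum_add_sum_compl, Fintype.sum_prod_type]
        simp only [mul_assoc]
    _ ≤ partialNormSum a D j * Y + partialNormSum a Dᶜ j * X :=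
        norm_add_le_of_le
          (norm_sum_mul_le_sum_norm_mul D _ _ fun e _ => hxy_le_Y e)
          (norm_sum_mul_le_sum_norm_mul Dᶜ _ _ fun e _ => hxy_le_X e)

theorem stmt12_general [NormMulClass R] (a : ι → κ → κ → R) (D : Finset (ι × κ))
    {lam : R} {x : ι → R} {y : κ → R} {p : ι} {q : κ}
    (heig : ∑ l, ∑ k, a l k q * x l * y k = lam * y q)
    (hx : ∀ l, ‖x l‖ ≤ 1) (hy : ∀ k, ‖y k‖ ≤ 1)
    (hp : ∀ l, ‖x l‖ ≤ ‖x p‖) (hq : ∀ k, ‖y k‖ ≤ ‖y q‖) :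
    (‖lam‖ - partialNormSum a D q) * ‖y q‖ ≤ partialNormSum a Dᶜ q * ‖x p‖ := by
  have hsum := norm_sum_sum_mul_mul_le_partialNormSum a D q hx hy hp hq
  rw [heig, norm_mul] at hsum
  rw [sub_mul]
  exact sub_le_iff_le_add'.mpr hsum

end NormSums

lemma abs_le_one_of_sum_mul_self_le_one {ι : Type*} [Fintype ι] {z : ι → ℝ}
    (hz : ∑ i, z i * z i ≤ 1) (i : ι) : |z i| ≤ 1 :=
  abs_le_one_iff_mul_self_le_one.mpr <|
    (single_le_sum (fun j _ => mul_self_nonneg (z j)) (mem_univ i)).trans hz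

/-- The set `Δ_S` of index pairs with at least one coordinate in `S`. -/
def pairsMeeting {α : Type*} [Fintype α] [DecidableEq α] (S : Finset α) : Finset (α × α) :=
  {e | e.1 ∈ S ∨ e.2 ∈ S}

section PartialSums

variable {n : ℕ} (a : Fin n → Fin n → Fin n → ℝ) (S : Finset (Fin n)) (j : Fin n)

lemma R3D_eq_partialNormSum : R3D a S j = partialNormSum a (pairsMeeting S) j := by
  simp only [R3D, partialNormSum, pairsMeeting, sum_filter, Fintype.sum_prod_type,
    Real.norm_eq_abs]

lemma R3Dbar_eq_partialNormSum_compl :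
    R3Dbar a S j = partialNormSum a (pairsMeeting S)ᶜ j := by
  simp only [R3Dbar, partialNormSum, pairsMeeting, compl_filter, not_or, sum_filter,
    Fintype.sum_prod_type, Real.norm_eq_abs]

end PartialSums

/-- Inequality (2.7): `(|λ| - R_q^{Δ_S,(3)}(A)) |y_q| ≤ R_q^{Δ̄_S,(3)}(A) |x_p|`. -/
theorem stmt12 {n : ℕ} (a : Fin n → Fin n → Fin n → ℝ)
    (hA : ∀ i j k, a i j k = a i k j)
    (lam : ℝ) (x y : Fin n → ℝ) (h : CEig a lam x y)
    (S : Finset (Fin n))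
    (p q : Fin n) (hp : ∀ i, |x i| ≤ |x p|) (hq : ∀ i, |y i| ≤ |y q|) :
    (|lam| - R3D a S q) * |y q| ≤ R3Dbar a S q * |x p| := by
  rw [R3D_eq_partialNormSum, R3Dbar_eq_partialNormSum_compl]
  obtain ⟨-, heig, hx, hy⟩ := h
  exact stmt12_general a (pairsMeeting S) (heig q) (abs_le_one_of_sum_mul_self_le_one hx.le)
    (abs_le_one_of_sum_mul_self_le_one hy.le) hp hq
end

section
/- (Corollary 2.2) Let A = (a_{ijk}) ∈ ℝ^{n×n×n} (n ≥ 1) be a piezoelectric-type tensor and let λ* be the largest C-eigenvalue of A (a C-eigenvalue such that every C-eigenvalue λ satisfies λ ≤ λ*). Then λ* ≤ ρ_min, where ρ_min := min_{S⊆N} ρ_S and ρ_S := max_{i,j∈N} (1/2)( R_j^{Δ_S,(3)}(A) + ( (R_j^{Δ_S,(3)}(A))² + 4 R_i^{(1)}(A) R_j^{Δ̄_S,(3)}(A) )^{1/2} ). -/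
open Finset

/-- `ρ_S = max_{i,j} (1/2)(R_j^{Δ_S,(3)} + ((R_j^{Δ_S,(3)})² + 4 R_i^{(1)} R_j^{Δ̄_S,(3)})^{1/2})`. -/
noncomputable def rhoS {n : ℕ} (hn : 0 < n) (a : Fin n → Fin n → Fin n → ℝ)
    (S : Finset (Fin n)) : ℝ :=
  Finset.univ.sup' (Finset.univ_nonempty_iff.mpr ⟨(⟨0, hn⟩, ⟨0, hn⟩)⟩)
    (fun p : Fin n × Fin n =>
      (1 / 2) * (R3D a S p.2 +
        Real.sqrt ((R3D a S p.2) ^ 2 + 4 * R1 a p.1 * R3Dbar a S p.2)))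

/-- `ρ_min = min_{S ⊆ N} ρ_S`. -/
noncomputable def rhoMin {n : ℕ} (hn : 0 < n) (a : Fin n → Fin n → Fin n → ℝ) : ℝ :=
  Finset.univ.inf' (Finset.univ_nonempty_iff.mpr ⟨(∅ : Finset (Fin n))⟩) (rhoS hn a)

/-!
Measure the eigenvectors in the sup norm. The equation `A y y = λ x`, read where `|x p| = ‖x‖`,
gives `|λ| ‖x‖ ≤ R_p^{(1)}`. In `x A y = λ y`, read where `|y q| = ‖y‖`, the terms with index pair
in `Δ_S` are bounded using only `‖x‖ ≤ 1`, and the others keep the factor `‖x‖`; dividing by `‖y‖`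
gives `|λ| ≤ R_q^{Δ_S} + R_q^{Δ̄_S} ‖x‖`. Multiplying the second bound by `|λ|` and inserting the
first yields `|λ|² ≤ R_q^{Δ_S} |λ| + R_p^{(1)} R_q^{Δ̄_S}`, so `|λ|` is at most the larger root of
this quadratic.
-/

theorem le_half_mul_add_sqrt_of_sq_le {b c t : ℝ} (h : t ^ 2 ≤ b * t + c) :
    t ≤ 1 / 2 * (b + √(b ^ 2 + 4 * c)) := by
  have discrim_bound : (2 * t - b) ^ 2 ≤ b ^ 2 + 4 * c := by linarith
  linarith [Real.le_sqrt_of_sq_le discrim_bound]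

theorem abs_sum_sum_mul_mul_le_s17 {ι κ R : Type*} [Ring R] [LinearOrder R] [IsStrictOrderedRing R]
    {s : Finset ι} {t : Finset κ} (c : ι → κ → R) {u : ι → R} {v : κ → R} {w : ι → κ → R}
    (h : ∀ j ∈ s, ∀ k ∈ t, |u j| * |v k| ≤ w j k) :
    |∑ j ∈ s, ∑ k ∈ t, c j k * u j * v k| ≤ ∑ j ∈ s, ∑ k ∈ t, |c j k| * w j k := by
  refine (abs_sum_le_sum_abs _ _).trans (sum_le_sum fun j hj => ?_)
  refine (abs_sum_le_sum_abs _ _).trans (sum_le_sum fun k hk => ?_)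
  rw [abs_mul, abs_mul, mul_assoc]
  exact mul_le_mul_of_nonneg_left (h j hj k hk) (abs_nonneg _)

theorem pi_norm_le_one_of_sum_mul_self_le_one {ι : Type*} [Fintype ι] {v : ι → ℝ}
    (h : ∑ i, v i * v i ≤ 1) : ‖v‖ ≤ 1 :=
  (pi_norm_le_iff_of_nonneg zero_le_one).2 fun i =>
    abs_le_one_iff_mul_self_le_one.2 <|
      (single_le_sum (f := fun i => v i * v i) (fun i _ => mul_self_nonneg (v i))
        (mem_univ i)).trans h

section

variable {n : ℕ} (a : Fin n → Fin n → Fin n → ℝ)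

theorem R3Dbar_nonneg (S : Finset (Fin n)) (j : Fin n) :
    0 ≤ R3Dbar a S j :=
  sum_nonneg fun l _ => sum_nonneg fun k _ => by split_ifs <;> positivity

theorem sum_sum_abs_mul_ite (S : Finset (Fin n)) (j : Fin n) (r s : ℝ) :
    ∑ l, ∑ k, |a l k j| * (if l ∈ S ∨ k ∈ S then r else s) =
      R3D a S j * r + R3Dbar a S j * s := by
  simp only [R3D, R3Dbar, sum_mul, ← sum_add_distrib, ← not_or]
  refine sum_congr rfl fun l _ => sum_congr rfl fun k _ => ?_
  by_cases h : l ∈ S ∨ k ∈ S <;> simp [h]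

theorem le_rhoS (hn : 0 < n) (S : Finset (Fin n)) (i j : Fin n) :
    1 / 2 * (R3D a S j + √(R3D a S j ^ 2 + 4 * R1 a i * R3Dbar a S j)) ≤ rhoS hn a S :=
  le_sup' (fun p : Fin n × Fin n =>
    1 / 2 * (R3D a S p.2 + √(R3D a S p.2 ^ 2 + 4 * R1 a p.1 * R3Dbar a S p.2)))
    (mem_univ (i, j))

namespace CEig

variable {a} {lam : ℝ} {x y : Fin n → ℝ}

theorem norm_left_le_one (h : CEig a lam x y) : ‖x‖ ≤ 1 :=
  pi_norm_le_one_of_sum_mul_self_le_one h.2.2.1.le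

theorem norm_right_le_one (h : CEig a lam x y) : ‖y‖ ≤ 1 :=
  pi_norm_le_one_of_sum_mul_self_le_one h.2.2.2.le

theorem right_ne_zero (h : CEig a lam x y) : y ≠ 0 := by
  rintro rfl
  simpa using h.2.2.2

theorem abs_mul_abs_left_le (h : CEig a lam x y) (i : Fin n) : |lam| * |x i| ≤ R1 a i := by
  have hy (j : Fin n) : |y j| ≤ 1 := (norm_le_pi_norm y j).trans h.norm_right_le_one
  calc |lam| * |x i| = |∑ j, ∑ k, a i j k * y j * y k| := by rw [h.1 i, abs_mul]
    _ ≤ ∑ j, ∑ k, |a i j k| * 1 :=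
        abs_sum_sum_mul_mul_le_s17 (a i) fun j _ k _ => mul_le_one₀ (hy j) (abs_nonneg _) (hy k)
    _ = R1 a i := by simp only [mul_one, R1]

theorem abs_mul_abs_right_le (h : CEig a lam x y) (S : Finset (Fin n)) (i : Fin n) :
    |lam| * |y i| ≤ (R3D a S i + R3Dbar a S i * ‖x‖) * ‖y‖ := by
  have weight_bound (j k : Fin n) :
      |x j| * |y k| ≤ if j ∈ S ∨ k ∈ S then ‖y‖ else ‖x‖ * ‖y‖ := by
    have hxy : |x j| * |y k| ≤ ‖x‖ * ‖y‖ :=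
      mul_le_mul (norm_le_pi_norm x j) (norm_le_pi_norm y k) (abs_nonneg _) (norm_nonneg _)
    split_ifs
    · exact hxy.trans (mul_le_of_le_one_left (norm_nonneg y) h.norm_left_le_one)
    · exact hxy
  calc |lam| * |y i| = |∑ j, ∑ k, a j k i * x j * y k| := by rw [h.2.1 i, abs_mul]
    _ ≤ ∑ j, ∑ k, |a j k i| * (if j ∈ S ∨ k ∈ S then ‖y‖ else ‖x‖ * ‖y‖) :=
        abs_sum_sum_mul_mul_le_s17 (fun j k => a j k i) fun j _ k _ => weight_bound j k
    _ = (R3D a S i + R3Dbar a S i * ‖x‖) * ‖y‖ := by rw [sum_sum_abs_mul_ite]; ring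

theorem exists_abs_mul_norm_left_le [NeZero n] (h : CEig a lam x y) :
    ∃ p, |lam| * ‖x‖ ≤ R1 a p := by
  obtain ⟨p, hp : |x p| = ‖x‖⟩ := (IsGreatest.pi_norm x).1
  exact ⟨p, hp ▸ h.abs_mul_abs_left_le p⟩

theorem exists_abs_le_add_mul_norm_left [NeZero n] (h : CEig a lam x y) (S : Finset (Fin n)) :
    ∃ q, |lam| ≤ R3D a S q + R3Dbar a S q * ‖x‖ := by
  obtain ⟨q, hq : |y q| = ‖y‖⟩ := (IsGreatest.pi_norm y).1
  have hyq := h.abs_mul_abs_right_le S q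
  rw [hq] at hyq
  exact ⟨q, le_of_mul_le_mul_right hyq (norm_pos_iff.2 h.right_ne_zero)⟩

theorem abs_le_rhoS (hn : 0 < n) (h : CEig a lam x y) (S : Finset (Fin n)) :
    |lam| ≤ rhoS hn a S := by
  have : NeZero n := ⟨hn.ne'⟩
  obtain ⟨p, hp⟩ := h.exists_abs_mul_norm_left_le
  obtain ⟨q, hq⟩ := h.exists_abs_le_add_mul_norm_left S
  have quadratic : |lam| ^ 2 ≤ R3D a S q * |lam| + R1 a p * R3Dbar a S q :=
    calc |lam| ^ 2 = |lam| * |lam| := sq _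
      _ ≤ (R3D a S q + R3Dbar a S q * ‖x‖) * |lam| :=
          mul_le_mul_of_nonneg_right hq (abs_nonneg lam)
      _ = R3D a S q * |lam| + |lam| * ‖x‖ * R3Dbar a S q := by ring
      _ ≤ R3D a S q * |lam| + R1 a p * R3Dbar a S q := by
          gcongr
          exact R3Dbar_nonneg a S q
  calc |lam| ≤ 1 / 2 * (R3D a S q + √(R3D a S q ^ 2 + 4 * (R1 a p * R3Dbar a S q))) :=
        le_half_mul_add_sqrt_of_sq_le quadratic
    _ ≤ rhoS hn a S := by simpa only [mul_assoc] using le_rhoS a hn S p q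

end CEig

end

theorem stmt17_general {n : ℕ} (hn : 0 < n) (a : Fin n → Fin n → Fin n → ℝ) {lam : ℝ}
    {x y : Fin n → ℝ} (h : CEig a lam x y) : |lam| ≤ rhoMin hn a :=
  le_inf' _ _ fun S _ => h.abs_le_rhoS hn S

/-- Corollary 2.2: the largest C-eigenvalue `λ*` satisfies `λ* ≤ ρ_min`. -/
theorem stmt17 {n : ℕ} (hn : 0 < n) (a : Fin n → Fin n → Fin n → ℝ)
    (hA : ∀ i j k, a i j k = a i k j)
    (lamstar : ℝ)
    (hmem : ∃ x y : Fin n → ℝ, CEig a lamstar x y)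
    (hmax : ∀ lam : ℝ, (∃ x y : Fin n → ℝ, CEig a lam x y) → lam ≤ lamstar) :
    lamstar ≤ rhoMin hn a := by
  obtain ⟨x, y, h⟩ := hmem
  exact (le_abs_self lamstar).trans (stmt17_general hn a h)
end
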